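/- There exists an absolute constant C > 0 with the following property. Let A ∈ ℝ^{d×d} be positive semidefinite, let δ ∈ (0, 1/2), let ε ∈ (0, 1), and let p, ℓ be integers with p ≥ C·(√(log(1/δ))/ε + log(1/δ)) and ℓ ≥ C·(√(log(1/δ))/ε + log(1/δ)). Let S ∈ ℝ^{d×p} and G ∈ ℝ^{d×ℓ} be random matrices whose entries are jointly i.i.d. Rademacher random variables, and let ω ↦ Q(ω) ∈ ℝ^{d×p} be any measurable map such that for every outcome ω, Q(ω)ᵀQ(ω) = I_p and the column space of A·S(ω) is contained in the column space of Q(ω). Then the estimator Hutch++(A) = tr(QᵀAQ) + (1/ℓ)·tr(Gᵀ(I − QQᵀ)A(I − QQᵀ)G) satisfies (1−ε)·tr(A) ≤ Hutch++(A) ≤ (1+ε)·tr(A) with probability at least 1 − δ. -/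

import Mathlib

open MeasureTheory Matrix

/-- The Frobenius norm of a real matrix. -/
noncomputable def frobNorm {m n : ℕ} (M : Matrix (Fin m) (Fin n) ℝ) : ℝ :=
  Real.sqrt (∑ i, ∑ j, (M i j) ^ 2)

/-- The Rademacher distribution on `ℝ`: uniform on `{-1, +1}`. -/
noncomputable def rademacher : Measure ℝ :=
  ((1 : ENNReal) / 2) • Measure.dirac (-1) + ((1 : ENNReal) / 2) • Measure.dirac 1

instance : IsProbabilityMeasure rademacher := by
  constructor
  simp [rademacher]
  exact ENNReal.inv_two_add_inv_two

/-- The law of a `d × n` random matrix with i.i.d. Rademacher entries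
(as a product measure on `Fin d → Fin n → ℝ`). -/
noncomputable def radMeasure (d n : ℕ) : Measure (Fin d → Fin n → ℝ) :=
  Measure.pi fun _ => Measure.pi fun _ => rademacher

/-- Hutchinson's estimator with `n` queries, evaluated at the query matrix `g`. -/
noncomputable def hutch {d n : ℕ} (A : Matrix (Fin d) (Fin d) ℝ)
    (g : Fin d → Fin n → ℝ) : ℝ :=
  (1 / (n : ℝ)) * ((Matrix.of g)ᵀ * A * Matrix.of g).trace

/-- The Hutch++ estimator: `tr(QᵀAQ) + (1/n)·tr(gᵀ(I - QQᵀ)A(I - QQᵀ)g)`,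
where `Q = Matrix.of q`. -/
noncomputable def hutchppEst {d p n : ℕ} (A : Matrix (Fin d) (Fin d) ℝ)
    (q : Fin d → Fin p → ℝ) (g : Fin d → Fin n → ℝ) : ℝ :=
  ((Matrix.of q)ᵀ * A * Matrix.of q).trace +
    (1 / (n : ℝ)) * ((Matrix.of g)ᵀ * (1 - Matrix.of q * (Matrix.of q)ᵀ) * A *
      (1 - Matrix.of q * (Matrix.of q)ᵀ) * Matrix.of g).trace

/-!
Let `P = 1 - QQᵀ`. Since `QᵀQ = 1`, the error of Hutch++ is the error of Hutchinson's estimator for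
`PAP`, so it suffices that `‖PAP‖_F ≲ tr A / √p` with high probability and that Hutchinson's
estimator concentrates at the scale of the Frobenius norm.

For the first point, eliminate the sketch columns from `A` one at a time, `A ↦ A - vvᵀ / sᵀAs` with
`v = As`. If `N` is the residual then `PA = PN`, because `P` annihilates `A` times every sketch
column; hence `‖PAP‖_F ≤ ‖N‖_F`. A random sign column `s` lowers the trace by `‖As‖² / sᵀAs`, which
by Paley–Zygmund and Markov is at least a multiple of `‖A‖_F² / tr A` with constant probability.
The total drop is at most `tr A` and the Frobenius norm never increases, so an exponential
supermartingale shows that `‖N‖_F²` stays above `C (tr A)² / p` with probability at most `e^{-cp}`.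

For the second point, the Hanson–Wright bound on the moment generating function of
`tᵀMt - tr M` follows by averaging out one sign at a time: `cosh x ≤ exp (x² / 2)` replaces the
contribution of that sign by a rank-one perturbation of the remaining matrix.
-/

open Finset ProbabilityTheory
open scoped BigOperators

section UniformAverages

variable {α β : Type*} [Fintype α] [Fintype β]

lemma expect_prod_type (f : α × β → ℝ) : 𝔼 x, f x = 𝔼 a, 𝔼 b, f (a, b) :=
  expect_product univ univ f

lemma expect_fin_cons {n : ℕ} (f : (Fin (n + 1) → α) → ℝ) :
    𝔼 s, f s = 𝔼 a, 𝔼 s : Fin n → α, f (Fin.cons a s : Fin (n + 1) → α) := by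
  rw [← expect_prod_type fun x : α × (Fin n → α) ↦ f (Fin.cons x.1 x.2)]
  exact (Fintype.expect_equiv (Fin.consEquiv fun _ ↦ α) _ _ fun _ ↦ rfl).symm

lemma expect_pi_option {ι : Type*} [Fintype ι] [DecidableEq ι] [DecidableEq (Option ι)]
    (f : (Option ι → α) → ℝ) :
    𝔼 s, f s = 𝔼 s : ι → α, 𝔼 a, f (fun o ↦ o.elim a s) := by
  rw [expect_comm, ← expect_prod_type fun x : α × (ι → α) ↦ f (fun o ↦ o.elim x.1 x.2)]
  refine Fintype.expect_equiv Equiv.piOptionEquivProd _ _ fun s ↦ congrArg f ?_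
  funext o
  cases o <;> rfl

lemma expect_pi_prod {κ : Type*} [Fintype κ] [DecidableEq κ] (f : α → ℝ) :
    𝔼 s : κ → α, ∏ k, f (s k) = (𝔼 a, f a) ^ Fintype.card κ := by
  have h := Fintype.prod_sum fun (_ : κ) (a : α) ↦ f a
  rw [prod_const, Finset.card_univ] at h
  simp only [Fintype.expect_eq_sum_div_card, div_pow, h, Fintype.card_fun, Nat.cast_pow]

/-- The probability of an event under the uniform distribution on a finite type. -/
noncomputable def unifProb (E : Set α) : ℝ :=
  𝔼 a, E.indicator 1 a

lemma unifProb_fin_cons {n : ℕ} (E : Set (Fin (n + 1) → α)) :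
    unifProb E = 𝔼 a, unifProb {s : Fin n → α | (Fin.cons a s : Fin (n + 1) → α) ∈ E} :=
  expect_fin_cons _

lemma unifProb_le_expect {E : Set α} {f : α → ℝ} (hf : ∀ a, 0 ≤ f a) (hE : ∀ a ∈ E, 1 ≤ f a) :
    unifProb E ≤ 𝔼 a, f a :=
  expect_le_expect fun a _ ↦ Set.indicator_apply_le' (hE a) fun _ ↦ hf a

lemma unifProb_nonneg (E : Set α) : 0 ≤ unifProb E :=
  expect_nonneg fun _ _ ↦ Set.indicator_nonneg (fun _ _ ↦ zero_le_one) _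

lemma unifProb_eq_zero {E : Set α} (h : ∀ a, a ∉ E) : unifProb E = 0 := by
  simp only [unifProb, Set.indicator_of_notMem (h _), expect_const_zero]

lemma unifProb_mono {E F : Set α} (h : E ⊆ F) : unifProb E ≤ unifProb F :=
  expect_le_expect fun _ _ ↦ Set.indicator_le_indicator_of_subset h (fun _ ↦ zero_le_one) _

lemma unifProb_le_one (E : Set α) : unifProb E ≤ 1 := by
  cases isEmpty_or_nonempty α
  · simp [unifProb]
  · rw [← Fintype.expect_one (ι := α) (M := ℝ)]
    exact expect_le_expect fun a _ ↦ Set.indicator_le_self' (fun _ _ ↦ zero_le_one) a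

lemma sub_unifProb_le_unifProb_diff (E F : Set α) :
    unifProb E - unifProb F ≤ unifProb (E \ F) := by
  rw [unifProb, unifProb, ← expect_sub_distrib]
  refine expect_le_expect fun a _ ↦ ?_
  by_cases hE : a ∈ E <;> by_cases hF : a ∈ F <;> simp [hE, hF]

lemma unifProb_compl [Nonempty α] (E : Set α) : unifProb Eᶜ = 1 - unifProb E := by
  simp only [unifProb, Set.indicator_compl, Pi.sub_apply, expect_sub_distrib, Pi.one_apply,
    Fintype.expect_one]

lemma unifProb_prod_le [Nonempty α] {E : Set (α × β)} (F : Set α) {δ : ℝ} (hδ : 0 ≤ δ)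
    (h : ∀ a ∉ F, unifProb {b | (a, b) ∈ E} ≤ δ) :
    unifProb E ≤ unifProb F + δ := by
  calc unifProb E = 𝔼 a, unifProb {b | (a, b) ∈ E} := expect_prod_type _
    _ ≤ 𝔼 a, (F.indicator 1 a + δ) := by
        refine expect_le_expect fun a _ ↦ ?_
        by_cases ha : a ∈ F
        · simpa [ha] using (unifProb_le_one _).trans (by linarith)
        · simpa [ha] using h a ha
    _ = unifProb F + δ := by rw [expect_add_distrib, Fintype.expect_const, unifProb]

lemma mul_unifProb_le_expect {f : α → ℝ} (hf : ∀ a, 0 ≤ f a) {c : ℝ} (hc : 0 < c) :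
    c * unifProb {a | c ≤ f a} ≤ 𝔼 a, f a := by
  rw [← le_div_iff₀' hc, expect_div]
  exact unifProb_le_expect (fun a ↦ div_nonneg (hf a) hc.le) fun a ha ↦ (one_le_div hc).2 ha

lemma unifProb_lt_abs_le_exp_mul {X : α → ℝ} {c t : ℝ} (hc : 0 ≤ c) :
    unifProb {a | t < |X a|} ≤
      Real.exp (-(c * t)) * (𝔼 a, Real.exp (c * X a) + 𝔼 a, Real.exp (-c * X a)) := by
  rw [← expect_add_distrib, mul_expect]
  refine unifProb_le_expect (fun a ↦ by positivity) fun a (ha : t < |X a|) ↦ ?_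
  have hone {b x : ℝ} (h : c * t ≤ b * x) : 1 ≤ Real.exp (-(c * t)) * Real.exp (b * x) := by
    rw [← Real.exp_add]
    exact Real.one_le_exp (by linarith)
  rw [mul_add]
  rcases lt_abs.1 ha with h | h
  · exact (hone (mul_le_mul_of_nonneg_left h.le hc)).trans (le_add_of_nonneg_right (by positivity))
  · refine (hone ?_).trans (le_add_of_nonneg_left (by positivity))
    rw [neg_mul_comm]
    exact mul_le_mul_of_nonneg_left h.le hc

lemma one_add_sq_div_two_le_cosh (x : ℝ) : 1 + x ^ 2 / 2 ≤ Real.cosh x := by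
  have habs : |x / 2| ≤ |Real.sinh (x / 2)| := by
    rw [Real.abs_sinh]
    exact Real.self_le_sinh_iff.2 (abs_nonneg _)
  have hcosh : Real.cosh x = 1 + 2 * Real.sinh (x / 2) ^ 2 := by
    have h := Real.cosh_two_mul (x / 2)
    rw [mul_div_cancel₀ x two_ne_zero, Real.cosh_sq] at h
    linarith
  linarith [sq_le_sq.2 habs]

lemma sq_mul_expect_sq_le [Nonempty α] (X : α → ℝ) (c : ℝ) :
    c ^ 2 * 𝔼 a, X a ^ 2 ≤ 𝔼 a, Real.exp (c * X a) + 𝔼 a, Real.exp (-c * X a) - 2 := by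
  rw [mul_expect, ← Fintype.expect_const (ι := α) (2 : ℝ), ← expect_add_distrib,
    ← expect_sub_distrib]
  refine expect_le_expect fun a _ ↦ ?_
  have h := one_add_sq_div_two_le_cosh (c * X a)
  rw [Real.cosh_eq, ← neg_mul, mul_pow] at h
  linarith

lemma paley_zygmund [Nonempty α] {X : α → ℝ} {θ : ℝ} (hX : 0 ≤ 𝔼 a, X a) (hθ₀ : 0 ≤ θ)
    (hθ₁ : θ ≤ 1) :
    ((1 - θ) * 𝔼 a, X a) ^ 2 ≤ (𝔼 a, X a ^ 2) * unifProb {a | θ * 𝔼 b, X b ≤ X a} := by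
  set m := 𝔼 a, X a
  set E : Set α := {a | θ * m ≤ X a}
  have hm : m ≤ θ * m + 𝔼 a, X a * E.indicator 1 a := by
    rw [← Fintype.expect_const (ι := α) (θ * m), ← expect_add_distrib]
    refine expect_le_expect fun a _ ↦ ?_
    by_cases ha : a ∈ E
    · simpa [ha] using mul_nonneg hθ₀ hX
    · simpa [ha] using (not_le.1 ha).le
  have hE : 𝔼 a, E.indicator (1 : α → ℝ) a ^ 2 = unifProb E :=
    expect_congr rfl fun a _ ↦ by by_cases ha : a ∈ E <;> simp [ha]
  calc ((1 - θ) * m) ^ 2 ≤ (𝔼 a, X a * E.indicator 1 a) ^ 2 :=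
        pow_le_pow_left₀ (mul_nonneg (sub_nonneg.2 hθ₁) hX) (by linarith) 2
    _ ≤ (𝔼 a, X a ^ 2) * unifProb E := hE ▸ expect_mul_sq_le_sq_mul_sq ..

lemma expect_exp_neg_le [Nonempty α] {f : α → ℝ} (hf : ∀ a, 0 ≤ f a) :
    𝔼 a, Real.exp (-f a) ≤ 1 - (1 - Real.exp (-1)) * unifProb {a | 1 ≤ f a} := by
  rw [unifProb, mul_expect, ← Fintype.expect_one (ι := α) (M := ℝ), ← expect_sub_distrib]
  refine expect_le_expect fun a _ ↦ ?_
  by_cases ha : 1 ≤ f a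
  · simp [ha]
  · simp [ha, hf a]

end UniformAverages

section RademacherQuadraticForms

open scoped Matrix.Norms.Frobenius

variable {m n ι : Type*} [Fintype m] [Fintype n] [Fintype ι]

lemma frobenius_norm_sq_eq_sum (M : Matrix m n ℝ) : ‖M‖ ^ 2 = ∑ i, ∑ j, M i j ^ 2 := by
  have h : 0 ≤ ∑ i, ∑ j, M i j ^ 2 := sum_nonneg fun i _ ↦ sum_nonneg fun j _ ↦ sq_nonneg _
  simp only [frobenius_norm_def, ← Real.sqrt_eq_rpow, Real.norm_eq_abs, Real.rpow_two, sq_abs,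
    Real.sq_sqrt h]

lemma frobenius_norm_sq_eq_trace (M : Matrix m n ℝ) : ‖M‖ ^ 2 = (Mᵀ * M).trace := by
  rw [frobenius_norm_sq_eq_sum, sum_comm]
  simp only [trace, diag_apply, mul_apply, transpose_apply, sq]

lemma frobenius_norm_vecMulVec_self (v : ι → ℝ) : ‖vecMulVec v v‖ = v ⬝ᵥ v := by
  have h : 0 ≤ v ⬝ᵥ v := sum_nonneg fun i _ ↦ mul_self_nonneg _
  rw [← pow_left_inj₀ (norm_nonneg _) h two_ne_zero, frobenius_norm_sq_eq_sum, sq (v ⬝ᵥ v)]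
  simp only [dotProduct, sum_mul_sum, vecMulVec_apply]
  exact sum_congr rfl fun i _ ↦ sum_congr rfl fun j _ ↦ by ring

lemma frobenius_norm_submatrix_equiv (M : Matrix n n ℝ) (e : m ≃ n) :
    ‖M.submatrix e e‖ = ‖M‖ := by
  rw [← pow_left_inj₀ (norm_nonneg _) (norm_nonneg _) two_ne_zero, frobenius_norm_sq_eq_sum,
    frobenius_norm_sq_eq_sum, ← e.sum_comp]
  exact sum_congr rfl fun i _ ↦ e.sum_comp fun j ↦ M (e i) j ^ 2

lemma dotProduct_vecMulVec_mulVec (u v x y : ι → ℝ) :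
    x ⬝ᵥ vecMulVec u v *ᵥ y = (x ⬝ᵥ u) * (v ⬝ᵥ y) := by
  simp [vecMulVec_mulVec, mul_comm]

lemma frobenius_norm_sq_option (M : Matrix (Option ι) (Option ι) ℝ) (hM : M.IsSymm) :
    ‖M‖ ^ 2 = M none none ^ 2 + 2 * ((fun i ↦ M none (some i)) ⬝ᵥ fun i ↦ M none (some i)) +
      ‖M.submatrix some some‖ ^ 2 := by
  simp only [frobenius_norm_sq_eq_sum, Fintype.sum_option, sum_add_distrib, dotProduct,
    submatrix_apply, hM.apply none (some _), ← sq]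
  ring

lemma dotProduct_mulVec_option (M : Matrix (Option ι) (Option ι) ℝ) (hM : M.IsSymm)
    (x : Option ι → ℝ) :
    x ⬝ᵥ M *ᵥ x = M none none * x none ^ 2 +
      2 * x none * ((fun i ↦ M none (some i)) ⬝ᵥ fun i ↦ x (some i)) +
      (fun i ↦ x (some i)) ⬝ᵥ M.submatrix some some *ᵥ fun i ↦ x (some i) := by
  have h (i : ι) : x (some i) * (M none (some i) * x none) =
    x none * (M none (some i) * x (some i)) := by ring
  simp only [dotProduct, mulVec, Fintype.sum_option, submatrix_apply, hM.apply none (some _),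
    mul_add, sum_add_distrib, mul_sum, h, two_mul, add_mul]
  ring

lemma trace_option (M : Matrix (Option ι) (Option ι) ℝ) :
    M.trace = M none none + (M.submatrix some some).trace :=
  Fintype.sum_option _

/-- The real vector with a given sign pattern; uniform sign patterns give Rademacher vectors. -/
def signVec {ι : Type*} (t : ι → ℤˣ) : ι → ℝ := fun i ↦ ((t i : ℤ) : ℝ)

lemma signVec_mul_self {ι : Type*} (t : ι → ℤˣ) (i : ι) : signVec t i * signVec t i = 1 := by
  rcases Int.units_eq_one_or (t i) with h | h <;> simp [signVec, h]

lemma expect_units_int (f : ℤˣ → ℝ) : 𝔼 a, f a = (f 1 + f (-1)) / 2 := by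
  rw [Fintype.expect_eq_sum_div_card, UnitsInt.univ, sum_pair (by decide), Fintype.card_units_int]
  norm_num

/-- The centred quadratic form `sᵀMs - tr M` of a sign vector `s`; under uniform signs this is a
Rademacher chaos of order two, with mean zero. -/
def signChaos (M : Matrix ι ι ℝ) (t : ι → ℤˣ) : ℝ := signVec t ⬝ᵥ M *ᵥ signVec t - M.trace

lemma signChaos_smul (c : ℝ) (M : Matrix ι ι ℝ) (t : ι → ℤˣ) :
    signChaos (c • M) t = c * signChaos M t := by
  simp only [signChaos, smul_mulVec, dotProduct_smul, trace_smul, smul_eq_mul]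
  ring

lemma signChaos_add_smul_vecMulVec (M : Matrix ι ι ℝ) (c : ℝ) (v : ι → ℝ) (t : ι → ℤˣ) :
    signChaos (M + c • vecMulVec v v) t =
      signChaos M t + c * (v ⬝ᵥ signVec t) ^ 2 - c * (v ⬝ᵥ v) := by
  simp only [signChaos, add_mulVec, smul_mulVec, dotProduct_add, dotProduct_smul, trace_add,
    dotProduct_vecMulVec_mulVec, trace_smul, trace_vecMulVec, smul_eq_mul,
    dotProduct_comm (signVec t) v]
  ring

lemma signChaos_option {M : Matrix (Option ι) (Option ι) ℝ} (hM : M.IsSymm) (a : ℤˣ)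
    (t : ι → ℤˣ) :
    signChaos M (fun o ↦ o.elim a t) = signChaos (M.submatrix some some) t +
      ((a : ℤ) : ℝ) * (2 * ((fun i ↦ M none (some i)) ⬝ᵥ signVec t)) := by
  have hsq : signVec (fun o : Option ι ↦ o.elim a t) none ^ 2 = 1 := by
    rw [sq, signVec_mul_self]
  have hsome : (fun i ↦ signVec (fun o : Option ι ↦ o.elim a t) (some i)) = signVec t := rfl
  have hnone : signVec (fun o : Option ι ↦ o.elim a t) none = ((a : ℤ) : ℝ) := rfl
  rw [signChaos, signChaos, dotProduct_mulVec_option M hM, trace_option, hsq, hsome, hnone]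
  ring

lemma signChaos_submatrix_equiv (M : Matrix n n ℝ) (e : m ≃ n) (t : m → ℤˣ) :
    signChaos (M.submatrix e e) t = signChaos M (t ∘ e.symm) := by
  rw [signChaos, signChaos, submatrix_mulVec_equiv, ← comp_equiv_symm_dotProduct]
  exact congrArg _ (e.sum_comp fun j ↦ M j j)

variable [DecidableEq ι]

lemma expect_signVec_mul_signVec (i j : ι) :
    𝔼 t : ι → ℤˣ, signVec t i * signVec t j = (1 : Matrix ι ι ℝ) i j := by
  rcases eq_or_ne i j with rfl | hij
  · simp [signVec_mul_self]
  · let flip : (ι → ℤˣ) ≃ (ι → ℤˣ) := Equiv.mulLeft (Pi.mulSingle i (-1))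
    have h : 𝔼 t : ι → ℤˣ, signVec t i * signVec t j =
        𝔼 t : ι → ℤˣ, -(signVec t i * signVec t j) :=
      Fintype.expect_equiv flip _ _ fun t ↦ by simp [flip, signVec, hij.symm]
    rw [expect_neg_distrib] at h
    rw [one_apply_ne hij]
    linarith

lemma expect_signVec_dotProduct_mulVec (M : Matrix ι ι ℝ) :
    𝔼 t : ι → ℤˣ, signVec t ⬝ᵥ M *ᵥ signVec t = M.trace := by
  simp only [dotProduct, mulVec, mul_sum, expect_sum_comm]
  have h (i j : ι) : 𝔼 t : ι → ℤˣ, signVec t i * (M i j * signVec t j) =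
      M i j * (1 : Matrix ι ι ℝ) i j := by
    rw [← expect_signVec_mul_signVec, mul_expect]
    exact expect_congr rfl fun t _ ↦ by ring
  simp [h, trace, one_apply]

lemma expect_exp_add_sign_mul_le (x y : ℝ) :
    𝔼 a : ℤˣ, Real.exp (x + ((a : ℤ) : ℝ) * y) ≤ Real.exp (x + y ^ 2 / 2) := by
  calc 𝔼 a : ℤˣ, Real.exp (x + ((a : ℤ) : ℝ) * y) = Real.exp x * Real.cosh y := by
        simp only [expect_units_int, Real.cosh_eq, Real.exp_add, Units.val_one, Units.val_neg,
          Int.cast_one, Int.cast_neg, one_mul, neg_one_mul]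
        ring
    _ ≤ Real.exp (x + y ^ 2 / 2) := by
        rw [Real.exp_add]
        gcongr
        exact Real.cosh_le_exp_half_sq y

lemma expect_exp_signChaos_option_le [DecidableEq (Option ι)]
    {M : Matrix (Option ι) (Option ι) ℝ} (hM : M.IsSymm) {v : ι → ℝ}
    (hv : ∀ i, M none (some i) = v i) :
    𝔼 t : Option ι → ℤˣ, Real.exp (signChaos M t) ≤ Real.exp (2 * (v ⬝ᵥ v)) *
        𝔼 t : ι → ℤˣ,
          Real.exp (signChaos (M.submatrix some some + (2 : ℝ) • vecMulVec v v) t) := by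
  rw [expect_pi_option, mul_expect]
  refine expect_le_expect fun t _ ↦ ?_
  simp only [signChaos_option hM, hv]
  refine (expect_exp_add_sign_mul_le _ _).trans_eq ?_
  rw [← Real.exp_add, signChaos_add_smul_vecMulVec]
  ring_nf

lemma expect_exp_signChaos_submatrix_equiv [DecidableEq m] [DecidableEq n] (M : Matrix n n ℝ)
    (e : m ≃ n) :
    𝔼 t : m → ℤˣ, Real.exp (signChaos (M.submatrix e e) t) =
      𝔼 t : n → ℤˣ, Real.exp (signChaos M t) :=
  Fintype.expect_equiv (e.arrowCongr (.refl _)) _ _ fun t ↦ by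
    rw [signChaos_submatrix_equiv]
    rfl

-- Averaging out the sign at `none` replaces the remaining block `N` by `N + 2vvᵀ`, where `v` is the
-- deleted row; the smallness of `M` pays for the growth of the norm.
lemma frobenius_norm_add_two_smul_vecMulVec_le {M : Matrix (Option ι) (Option ι) ℝ}
    (hM : M.IsSymm) (hM' : ‖M‖ ≤ 1 / 4) {v : ι → ℝ} (hv : ∀ i, M none (some i) = v i) :
    ‖M.submatrix some some + (2 : ℝ) • vecMulVec v v‖ ≤ 1 / 4 ∧
      2 * (v ⬝ᵥ v) + 2 * ‖M.submatrix some some + (2 : ℝ) • vecMulVec v v‖ ^ 2 ≤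
        2 * ‖M‖ ^ 2 := by
  set N := M.submatrix some some
  have htri : ‖N + (2 : ℝ) • vecMulVec v v‖ ≤ ‖N‖ + 2 * (v ⬝ᵥ v) :=
    (norm_add_le _ _).trans_eq <| by
      rw [norm_smul, frobenius_norm_vecMulVec_self, Real.norm_two]
  have hblock : ‖N‖ ^ 2 + 2 * (v ⬝ᵥ v) ≤ ‖M‖ ^ 2 := by
    rw [frobenius_norm_sq_option M hM]
    simp only [hv]
    linarith [sq_nonneg (M none none)]
  have hM2 : ‖M‖ ^ 2 ≤ (1 / 4) ^ 2 := pow_le_pow_left₀ (norm_nonneg _) hM' 2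
  have hv0 : 0 ≤ v ⬝ᵥ v := sum_nonneg fun i _ ↦ mul_self_nonneg _
  generalize v ⬝ᵥ v = y at *
  have hN := norm_nonneg N
  generalize ‖N‖ = x at *
  have hx : x ≤ 1 / 4 := by nlinarith
  have hxy : 4 * (x + y) ≤ 1 := by nlinarith
  have hsq : (x + 2 * y) ^ 2 ≤ x ^ 2 + y := by nlinarith
  have hnew := (pow_le_pow_left₀ (norm_nonneg _) htri 2).trans hsq
  exact ⟨by nlinarith [norm_nonneg (N + (2 : ℝ) • vecMulVec v v)], by linarith⟩

lemma expect_exp_signChaos_le {M : Matrix ι ι ℝ} (hM : M.IsSymm) (hM' : ‖M‖ ≤ 1 / 4) :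
    𝔼 t : ι → ℤˣ, Real.exp (signChaos M t) ≤ Real.exp (2 * ‖M‖ ^ 2) := by
  revert M
  refine Fintype.induction_empty_option (P := fun ι _ ↦ ∀ [DecidableEq ι] {M : Matrix ι ι ℝ},
    M.IsSymm → ‖M‖ ≤ 1 / 4 →
      𝔼 t : ι → ℤˣ, Real.exp (signChaos M t) ≤ Real.exp (2 * ‖M‖ ^ 2)) ?_ ?_ ?_ ι
  · intro m n _ e ih _ M hM hM'
    classical
    let _ := Fintype.ofEquiv _ e.symm
    rw [← frobenius_norm_submatrix_equiv M e] at hM' ⊢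
    rw [← expect_exp_signChaos_submatrix_equiv M e]
    exact ih (hM.submatrix e) hM'
  · intro _ M _ _
    simp [signChaos, trace]
  · intro ι _ ih _ M hM hM'
    classical
    set v : ι → ℝ := fun i ↦ M none (some i)
    obtain ⟨hN', hexp⟩ := frobenius_norm_add_two_smul_vecMulVec_le hM hM' fun i ↦ Eq.refl (v i)
    have hsymm : (M.submatrix some some + (2 : ℝ) • vecMulVec v v).IsSymm :=
      (hM.submatrix some).add <| .smul (transpose_vecMulVec v v) 2
    refine (expect_exp_signChaos_option_le hM fun i ↦ Eq.refl (v i)).trans ?_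
    refine (mul_le_mul_of_nonneg_left (ih hsymm hN') (Real.exp_nonneg _)).trans ?_
    rw [← Real.exp_add]
    exact Real.exp_le_exp.2 hexp

lemma expect_exp_mul_signChaos_le {M : Matrix ι ι ℝ} (hM : M.IsSymm) {c : ℝ}
    (hc : |c| * ‖M‖ ≤ 1 / 4) :
    𝔼 t : ι → ℤˣ, Real.exp (c * signChaos M t) ≤ Real.exp (2 * (c * ‖M‖) ^ 2) := by
  have hnorm : ‖c • M‖ = |c| * ‖M‖ := by rw [norm_smul, Real.norm_eq_abs]
  have h := expect_exp_signChaos_le (hM.smul c) (hnorm.trans_le hc)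
  simpa only [signChaos_smul, hnorm, mul_pow, sq_abs] using h

lemma expect_signChaos_sq_le {M : Matrix ι ι ℝ} (hM : M.IsSymm) :
    𝔼 t : ι → ℤˣ, signChaos M t ^ 2 ≤ 5 * ‖M‖ ^ 2 := by
  rcases eq_or_ne M 0 with rfl | hM₀
  · simp [signChaos]
  set c := 1 / (4 * ‖M‖) with hc
  have hcM : c * ‖M‖ = 1 / 4 := by
    rw [hc, div_mul_eq_mul_div, mul_div_mul_right _ _ (norm_ne_zero_iff.2 hM₀)]
  have hmgf {b : ℝ} (hb : |b| = c) : 𝔼 t : ι → ℤˣ, Real.exp (b * signChaos M t) ≤ 8 / 7 := by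
    refine (expect_exp_mul_signChaos_le hM (by rw [hb, hcM])).trans ?_
    rw [mul_pow, ← sq_abs b, hb, ← mul_pow, hcM]
    exact (Real.exp_bound_div_one_sub_of_interval (by norm_num) (by norm_num)).trans_eq
      (by norm_num)
  have habs : |c| = c := abs_of_nonneg (by positivity)
  calc 𝔼 t : ι → ℤˣ, signChaos M t ^ 2
      = 16 * ‖M‖ ^ 2 * (c ^ 2 * 𝔼 t : ι → ℤˣ, signChaos M t ^ 2) := by
        have hcM2 : 16 * (c * ‖M‖) ^ 2 = 1 := by
          rw [hcM]
          norm_num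
        linear_combination (-𝔼 t : ι → ℤˣ, signChaos M t ^ 2) * hcM2
    _ ≤ 16 * ‖M‖ ^ 2 * (8 / 7 + 8 / 7 - 2) := by
        refine mul_le_mul_of_nonneg_left ?_ (by positivity)
        linarith [sq_mul_expect_sq_le (signChaos M) c, hmgf habs, hmgf ((abs_neg c).trans habs)]
    _ ≤ 5 * ‖M‖ ^ 2 := by linarith [sq_nonneg ‖M‖]

end RademacherQuadraticForms

section Deflation

open scoped Matrix.Norms.Frobenius MatrixOrder

variable {ι : Type*} [Fintype ι] {A : Matrix ι ι ℝ}

lemma sq_dotProduct_mulVec_le_of_posSemidef (hA : A.PosSemidef) (x y : ι → ℝ) :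
    (x ⬝ᵥ A *ᵥ y) ^ 2 ≤ (x ⬝ᵥ A *ᵥ x) * (y ⬝ᵥ A *ᵥ y) := by
  classical
  obtain ⟨B, rfl⟩ := CStarAlgebra.nonneg_iff_eq_star_mul_self.1 hA.nonneg
  have h (u v : ι → ℝ) : u ⬝ᵥ (star B * B) *ᵥ v = (B *ᵥ u) ⬝ᵥ (B *ᵥ v) := by
    rw [star_eq_conjTranspose, conjTranspose_eq_transpose_of_trivial, ← mulVec_mulVec,
      dotProduct_mulVec, vecMul_transpose]
  simp only [h]
  simpa only [dotProduct, ← sq] using sum_mul_sq_le_sq_mul_sq univ (B *ᵥ x) (B *ᵥ y)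

lemma frobenius_norm_le_norm_add_smul_vecMulVec (hA : A.PosSemidef) {c : ℝ} (hc : 0 ≤ c)
    (v : ι → ℝ) : ‖A‖ ≤ ‖A + c • vecMulVec v v‖ := by
  set V := c • vecMulVec v v
  have hAt : Aᵀ = A := isHermitian_iff_isSymm.1 hA.isHermitian
  have hVt : Vᵀ = V := by rw [transpose_smul, transpose_vecMulVec]
  have hAV : 0 ≤ (A * V).trace := by
    rw [mul_smul_comm, trace_smul, mul_vecMulVec, trace_vecMulVec, dotProduct_comm]
    exact mul_nonneg hc (hA.dotProduct_mulVec_nonneg v)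
  have hnorm : ‖A + V‖ ^ 2 = ‖A‖ ^ 2 + 2 * (A * V).trace + ‖V‖ ^ 2 := by
    simp only [frobenius_norm_sq_eq_trace, transpose_add, hAt, hVt, add_mul, mul_add, trace_add,
      trace_mul_comm V A]
    ring
  refine le_of_sq_le_sq ?_ (norm_nonneg _)
  linarith [sq_nonneg ‖V‖]

/-- The Schur complement of `A` along `s`: the positive semidefinite part of `A` left after one step
of symmetric Gaussian elimination in the direction `s`. When `sᵀAs = 0` the convention `0⁻¹ = 0`
gives `deflate A s = A`, which is the right value since then `As = 0`. -/
noncomputable def deflate (A : Matrix ι ι ℝ) (s : ι → ℝ) : Matrix ι ι ℝ :=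
  A - (s ⬝ᵥ A *ᵥ s)⁻¹ • vecMulVec (A *ᵥ s) (A *ᵥ s)

lemma posSemidef_deflate (hA : A.PosSemidef) (s : ι → ℝ) : (deflate A s).PosSemidef := by
  refine .of_dotProduct_mulVec_nonneg ?_ fun x ↦ ?_
  · exact isHermitian_iff_isSymm.2 <| (isHermitian_iff_isSymm.1 hA.isHermitian).sub <|
      .smul (transpose_vecMulVec _ _) _
  have hs : 0 ≤ s ⬝ᵥ A *ᵥ s := hA.dotProduct_mulVec_nonneg s
  have hx : 0 ≤ x ⬝ᵥ A *ᵥ x := hA.dotProduct_mulVec_nonneg x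
  rw [star_trivial, deflate, sub_mulVec, smul_mulVec, dotProduct_sub, dotProduct_smul, smul_eq_mul,
    dotProduct_vecMulVec_mulVec, dotProduct_comm (A *ᵥ s), ← sq, sub_nonneg]
  exact inv_mul_le_of_le_mul₀ hs hx <|
    (sq_dotProduct_mulVec_le_of_posSemidef hA x s).trans_eq (mul_comm _ _)

lemma trace_deflate (A : Matrix ι ι ℝ) (s : ι → ℝ) :
    (deflate A s).trace = A.trace - (s ⬝ᵥ A *ᵥ s)⁻¹ * (A *ᵥ s ⬝ᵥ A *ᵥ s) := by
  rw [deflate, trace_sub, trace_smul, trace_vecMulVec, smul_eq_mul]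

lemma trace_deflate_le (hA : A.PosSemidef) (s : ι → ℝ) : (deflate A s).trace ≤ A.trace := by
  rw [trace_deflate, sub_le_self_iff]
  exact mul_nonneg (inv_nonneg.2 (hA.dotProduct_mulVec_nonneg s))
    (sum_nonneg fun i _ ↦ mul_self_nonneg _)

lemma frobenius_norm_deflate_le (hA : A.PosSemidef) (s : ι → ℝ) : ‖deflate A s‖ ≤ ‖A‖ := by
  simpa only [deflate, star_trivial, sub_add_cancel] using frobenius_norm_le_norm_add_smul_vecMulVec
    (posSemidef_deflate hA s) (inv_nonneg.2 (hA.dotProduct_mulVec_nonneg s)) (A *ᵥ s)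

lemma mul_deflate_of_mulVec_eq_zero {m : Type*} {P : Matrix m ι ℝ} {s : ι → ℝ}
    (h : P *ᵥ A *ᵥ s = 0) : P * deflate A s = P * A := by
  rw [deflate, Matrix.mul_sub, Matrix.mul_smul, mul_vecMulVec, h, zero_vecMulVec,
    smul_zero, sub_zero]

/-- What remains of `A` after deflating along the vectors of `l` in turn: the error of the Nyström
approximation of `A` from the span of `l`. -/
noncomputable def nystromResidual (A : Matrix ι ι ℝ) (l : List (ι → ℝ)) : Matrix ι ι ℝ :=
  l.foldl deflate A

lemma nystromResidual_cons (A : Matrix ι ι ℝ) (s : ι → ℝ) (l : List (ι → ℝ)) :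
    nystromResidual A (s :: l) = nystromResidual (deflate A s) l :=
  rfl

lemma frobenius_norm_nystromResidual_le (hA : A.PosSemidef) (l : List (ι → ℝ)) :
    ‖nystromResidual A l‖ ≤ ‖A‖ := by
  induction l generalizing A with
  | nil => exact le_rfl
  | cons s l ih => exact (ih (posSemidef_deflate hA s)).trans (frobenius_norm_deflate_le hA s)

lemma mul_nystromResidual_of_mulVec_eq_zero {m : Type*} {P : Matrix m ι ℝ} {l : List (ι → ℝ)}
    (h : ∀ s ∈ l, P *ᵥ A *ᵥ s = 0) : P * nystromResidual A l = P * A := by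
  induction l generalizing A with
  | nil => rfl
  | cons s l ih =>
    rw [List.forall_mem_cons] at h
    have hP : P * deflate A s = P * A := mul_deflate_of_mulVec_eq_zero h.1
    rw [← hP]
    refine ih fun t ht ↦ ?_
    rw [mulVec_mulVec, hP, ← mulVec_mulVec]
    exact h.2 t ht

end Deflation

section RandomDeflation

open scoped Matrix.Norms.Frobenius

variable {ι : Type*} [Fintype ι] [DecidableEq ι] {A : Matrix ι ι ℝ}

lemma expect_sq_signVec_dotProduct_mulVec_le {M : Matrix ι ι ℝ} (hM : M.IsSymm) :
    𝔼 t : ι → ℤˣ, (signVec t ⬝ᵥ M *ᵥ signVec t) ^ 2 ≤ M.trace ^ 2 + 5 * ‖M‖ ^ 2 := by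
  have hsq (t : ι → ℤˣ) : (signVec t ⬝ᵥ M *ᵥ signVec t) ^ 2 =
      signChaos M t ^ 2 + 2 * M.trace * (signVec t ⬝ᵥ M *ᵥ signVec t) - M.trace ^ 2 := by
    rw [signChaos]
    ring
  simp only [hsq, expect_sub_distrib, expect_add_distrib, ← mul_expect,
    expect_signVec_dotProduct_mulVec, Fintype.expect_const]
  linarith [expect_signChaos_sq_le hM]

lemma one_div_le_unifProb_half_norm_sq_le (hA : A.IsSymm) (hA₀ : A ≠ 0) :
    1 / 24 ≤ unifProb {t : ι → ℤˣ | 1 / 2 * ‖A‖ ^ 2 ≤ A *ᵥ signVec t ⬝ᵥ A *ᵥ signVec t} := by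
  have hX (t : ι → ℤˣ) : A *ᵥ signVec t ⬝ᵥ A *ᵥ signVec t =
      signVec t ⬝ᵥ (A * A) *ᵥ signVec t := by
    rw [← mulVec_mulVec, dotProduct_mulVec (signVec t), ← mulVec_transpose, hA.eq]
  have htr : (A * A).trace = ‖A‖ ^ 2 := by rw [frobenius_norm_sq_eq_trace, hA.eq]
  have hmean : 𝔼 t : ι → ℤˣ, signVec t ⬝ᵥ (A * A) *ᵥ signVec t = ‖A‖ ^ 2 := by
    rw [expect_signVec_dotProduct_mulVec, htr]
  have hsymm : (A * A).IsSymm := by rw [IsSymm, transpose_mul, hA.eq]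
  have hsecond : 𝔼 t : ι → ℤˣ, (signVec t ⬝ᵥ (A * A) *ᵥ signVec t) ^ 2 ≤ 6 * ‖A‖ ^ 4 := by
    refine (expect_sq_signVec_dotProduct_mulVec_le hsymm).trans ?_
    have h := pow_le_pow_left₀ (norm_nonneg _) (frobenius_norm_mul A A) 2
    rw [htr]
    linarith
  have hPZ := paley_zygmund (hmean ▸ sq_nonneg ‖A‖) one_half_pos.le one_half_lt_one.le
  have hpos : 0 < ‖A‖ ^ 4 := pow_pos (norm_pos_iff.2 hA₀) 4
  simp only [hX]
  rw [hmean] at hPZ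
  have h := hPZ.trans (mul_le_mul_of_nonneg_right hsecond (unifProb_nonneg _))
  refine le_of_mul_le_mul_left ?_ hpos
  linarith

lemma unifProb_le_signVec_dotProduct_mulVec_le (hA : A.PosSemidef) (hA₀ : A ≠ 0) :
    unifProb {t : ι → ℤˣ | 40 * A.trace ≤ signVec t ⬝ᵥ A *ᵥ signVec t} ≤ 1 / 40 := by
  have htr : 0 < A.trace := hA.trace_nonneg.lt_of_ne' fun h₀ ↦ hA₀ (hA.trace_eq_zero_iff.1 h₀)
  have hMarkov := mul_unifProb_le_expect (c := 40 * A.trace)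
    (fun t : ι → ℤˣ ↦ hA.dotProduct_mulVec_nonneg (signVec t)) (by linarith)
  simp only [star_trivial, expect_signVec_dotProduct_mulVec] at hMarkov
  refine le_of_mul_le_mul_left ?_ htr
  linarith

lemma one_div_le_unifProb_one_le_mul_trace_sub_trace_deflate (hA : A.PosSemidef) (hA₀ : A ≠ 0)
    {κ : ℝ} (hκ : 0 ≤ κ) (h : 80 * A.trace ≤ κ * ‖A‖ ^ 2) :
    1 / 60 ≤ unifProb {t : ι → ℤˣ | 1 ≤ κ * (A.trace - (deflate A (signVec t)).trace)} := by
  set E := {t : ι → ℤˣ | 1 / 2 * ‖A‖ ^ 2 ≤ A *ᵥ signVec t ⬝ᵥ A *ᵥ signVec t}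
  set F := {t : ι → ℤˣ | 40 * A.trace ≤ signVec t ⬝ᵥ A *ᵥ signVec t}
  have hE : 1 / 24 ≤ unifProb E :=
    one_div_le_unifProb_half_norm_sq_le (isHermitian_iff_isSymm.1 hA.isHermitian) hA₀
  have hF : unifProb F ≤ 1 / 40 := unifProb_le_signVec_dotProduct_mulVec_le hA hA₀
  have hsub : E \ F ⊆ {t : ι → ℤˣ | 1 ≤ κ * (A.trace - (deflate A (signVec t)).trace)} := by
    rintro t ⟨hX : _ ≤ A *ᵥ signVec t ⬝ᵥ A *ᵥ signVec t, hY : ¬_ ≤ signVec t ⬝ᵥ A *ᵥ signVec t⟩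
    have hpos : 0 < signVec t ⬝ᵥ A *ᵥ signVec t := by
      refine (hA.dotProduct_mulVec_nonneg _).lt_of_ne' fun h₀ ↦ ?_
      have hAs : A *ᵥ signVec t = 0 := (hA.dotProduct_mulVec_zero_iff _).1 h₀
      rw [hAs, dotProduct_zero] at hX
      linarith [pow_pos (norm_pos_iff.2 hA₀) 2]
    change 1 ≤ κ * _
    rw [trace_deflate, sub_sub_cancel, mul_left_comm, one_le_inv_mul₀ hpos]
    linarith [mul_le_mul_of_nonneg_left hX hκ]
  linarith [sub_unifProb_le_unifProb_diff E F, unifProb_mono hsub]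

lemma expect_exp_trace_deflate_sub_le (hA : A.PosSemidef) (hA₀ : A ≠ 0) {κ : ℝ} (hκ : 0 ≤ κ)
    (h : 80 * A.trace ≤ κ * ‖A‖ ^ 2) :
    𝔼 t : ι → ℤˣ, Real.exp (-(κ * (A.trace - (deflate A (signVec t)).trace))) ≤ 99 / 100 := by
  have hprob := one_div_le_unifProb_one_le_mul_trace_sub_trace_deflate hA hA₀ hκ h
  have hexp := expect_exp_neg_le fun t : ι → ℤˣ ↦
    mul_nonneg hκ (sub_nonneg.2 (trace_deflate_le hA (signVec t)))
  have he : Real.exp (-1) ≤ 2 / 5 := Real.exp_neg_one_lt_d9.le.trans (by norm_num)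
  refine hexp.trans ?_
  nlinarith

lemma unifProb_lt_mul_norm_nystromResidual_sq_le {κ K : ℝ} (hκ : 0 ≤ κ) (n : ℕ)
    (hA : A.PosSemidef) (hK : 80 * A.trace ≤ K) :
    unifProb {S : Fin n → ι → ℤˣ |
        K < κ * ‖nystromResidual A (List.ofFn fun i ↦ signVec (S i))‖ ^ 2} ≤
      Real.exp (κ * A.trace) * (99 / 100) ^ n := by
  induction n generalizing A with
  | zero =>
    refine (unifProb_le_one _).trans ?_
    simpa using mul_nonneg hκ hA.trace_nonneg
  | succ n ih =>
    rcases le_or_gt (κ * ‖A‖ ^ 2) K with hsmall | hlarge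
    · refine (unifProb_eq_zero fun S (hS : K < _) ↦ hS.not_ge (hsmall.trans' ?_)).trans_le
        (by positivity)
      gcongr
      exact frobenius_norm_nystromResidual_le hA _
    have hA₀ : A ≠ 0 := by
      rintro rfl
      simp only [trace_zero, norm_zero] at hK hlarge
      linarith
    rw [unifProb_fin_cons]
    simp only [Set.mem_ofPred_eq, List.ofFn_succ, Fin.cons_zero, Fin.cons_succ,
      nystromResidual_cons]
    calc _ ≤ 𝔼 t : ι → ℤˣ, Real.exp (κ * A.trace) * (99 / 100) ^ n *
          Real.exp (-(κ * (A.trace - (deflate A (signVec t)).trace))) := by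
          refine expect_le_expect fun t _ ↦ ?_
          have htr : 80 * (deflate A (signVec t)).trace ≤ K := by
            linarith [trace_deflate_le hA (signVec t)]
          refine (ih (posSemidef_deflate hA _) htr).trans_eq ?_
          rw [mul_right_comm, ← Real.exp_add]
          ring_nf
      _ ≤ Real.exp (κ * A.trace) * (99 / 100) ^ n * (99 / 100) := by
          rw [← mul_expect]
          gcongr
          exact expect_exp_trace_deflate_sub_le hA hA₀ hκ (hK.trans hlarge.le)
      _ = _ := by rw [mul_assoc, pow_succ]

lemma unifProb_lt_norm_nystromResidual_sq_le (hA : A.PosSemidef) (n : ℕ) :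
    unifProb {S : Fin n → ι → ℤˣ | 16000 * A.trace ^ 2 <
        n * ‖nystromResidual A (List.ofFn fun i ↦ signVec (S i))‖ ^ 2} ≤
      Real.exp (-(n / 200)) := by
  rcases eq_or_ne A 0 with rfl | hA₀
  · rw [unifProb_eq_zero fun S hS ↦ ?_]
    · exact Real.exp_nonneg _
    have hzero : ‖nystromResidual (0 : Matrix ι ι ℝ) (List.ofFn fun i ↦ signVec (S i))‖ = 0 :=
      ((frobenius_norm_nystromResidual_le hA _).trans_eq norm_zero).antisymm (norm_nonneg _)
    simp [hzero] at hS
  have htr : 0 < A.trace := hA.trace_nonneg.lt_of_ne' fun h₀ ↦ hA₀ (hA.trace_eq_zero_iff.1 h₀)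
  have hκ : 0 ≤ n / (200 * A.trace) := by positivity
  refine (unifProb_mono fun S hS ↦ ?_).trans <|
    (unifProb_lt_mul_norm_nystromResidual_sq_le hκ n hA le_rfl).trans ?_
  · simp only [Set.mem_ofPred_eq] at hS ⊢
    rw [div_mul_eq_mul_div, lt_div_iff₀ (by positivity)]
    linarith
  · have hbase : (99 / 100 : ℝ) ≤ Real.exp (-(1 / 100)) := by
      linarith [Real.add_one_le_exp (-(1 / 100) : ℝ)]
    calc Real.exp (n / (200 * A.trace) * A.trace) * (99 / 100) ^ n
        ≤ Real.exp (n / 200) * Real.exp (-(1 / 100)) ^ n := by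
          rw [div_mul_eq_div_div, div_mul_cancel₀ _ htr.ne']
          gcongr
      _ = Real.exp (-(n / 200)) := by
          rw [← Real.exp_nat_mul, ← Real.exp_add]
          ring_nf

end RandomDeflation

section HutchinsonTail

open scoped Matrix.Norms.Frobenius

variable {κ ι : Type*} [Fintype κ] [Fintype ι] [DecidableEq κ] [DecidableEq ι]
  {M : Matrix ι ι ℝ}

lemma expect_exp_mul_sum_signChaos_le (hM : M.IsSymm) {c : ℝ} (hc : |c| * ‖M‖ ≤ 1 / 4) :
    𝔼 G : κ → ι → ℤˣ, Real.exp (c * ∑ k, signChaos M (G k)) ≤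
      Real.exp (Fintype.card κ * (2 * (c * ‖M‖) ^ 2)) := by
  simp only [mul_sum, Real.exp_sum]
  rw [expect_pi_prod fun t ↦ Real.exp (c * signChaos M t), Real.exp_nat_mul]
  gcongr
  exact expect_exp_mul_signChaos_le hM hc

lemma unifProb_lt_abs_sum_signChaos_le (hM : M.IsSymm) {F u : ℝ} (hF : ‖M‖ ≤ F) (hu : 0 ≤ u) :
    unifProb {G : κ → ι → ℤˣ | Fintype.card κ * (u * F) < |∑ k, signChaos M (G k)|} ≤
      2 * Real.exp (-(Fintype.card κ / 8 * (min u 1 * u))) := by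
  rcases ((norm_nonneg M).trans hF).eq_or_lt with rfl | hF₀
  · obtain rfl : M = 0 := norm_eq_zero.1 (hF.antisymm (norm_nonneg M))
    rw [unifProb_eq_zero fun G hG ↦ by simp [signChaos] at hG]
    positivity
  have hw : 0 ≤ min u 1 := le_min hu zero_le_one
  have hN : (0 : ℝ) ≤ Fintype.card κ := Nat.cast_nonneg _
  set c := min u 1 / (4 * F)
  have hc : 0 ≤ c := by positivity
  have hcM : c * ‖M‖ ≤ min u 1 / 4 := (mul_le_mul_of_nonneg_left hF hc).trans_eq <| by
    simp only [c]
    field_simp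
  have hmgf {b : ℝ} (hb : |b| = c) :
      𝔼 G : κ → ι → ℤˣ, Real.exp (b * ∑ k, signChaos M (G k)) ≤
        Real.exp (Fintype.card κ * (min u 1 ^ 2 / 8)) := by
    have hsmall : |b| * ‖M‖ ≤ 1 / 4 := by linarith [min_le_right u 1, hb ▸ hcM]
    refine (expect_exp_mul_sum_signChaos_le hM hsmall).trans ?_
    rw [mul_pow, ← sq_abs b, hb, ← mul_pow]
    have h := pow_le_pow_left₀ (mul_nonneg hc (norm_nonneg M)) hcM 2
    gcongr
    linarith
  have hcF : c * (Fintype.card κ * (u * F)) = Fintype.card κ * (min u 1 * u / 4) := by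
    simp only [c]
    field_simp
  have hwu : min u 1 ^ 2 ≤ min u 1 * u :=
    (sq _).trans_le (mul_le_mul_of_nonneg_left (min_le_left u 1) hw)
  calc _ ≤ Real.exp (-(c * (Fintype.card κ * (u * F)))) *
        (Real.exp (Fintype.card κ * (min u 1 ^ 2 / 8)) +
          Real.exp (Fintype.card κ * (min u 1 ^ 2 / 8))) := by
        refine (unifProb_lt_abs_le_exp_mul hc).trans ?_
        gcongr
        · exact hmgf (abs_of_nonneg hc)
        · exact hmgf ((abs_neg c).trans (abs_of_nonneg hc))
    _ = 2 * Real.exp (Fintype.card κ * (min u 1 ^ 2 / 8 - min u 1 * u / 4)) := by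
        rw [hcF, ← two_mul, mul_left_comm, ← Real.exp_add]
        ring_nf
    _ ≤ 2 * Real.exp (-(Fintype.card κ / 8 * (min u 1 * u))) := by
        gcongr
        nlinarith [mul_le_mul_of_nonneg_left hwu hN]

end HutchinsonTail

section RangeFinder

open scoped Matrix.Norms.Frobenius

variable {m n l k : Type*} [Fintype m] [Fintype n] [Fintype l]

lemma frobenius_norm_mul_le_of_isIdempotentElem {P : Matrix m m ℝ} (hP : P.IsSymm)
    (hP' : IsIdempotentElem P) (N : Matrix m n ℝ) : ‖P * N‖ ≤ ‖N‖ := by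
  classical
  have hPN (R : Matrix m m ℝ) (hR : R.IsSymm) (hR' : IsIdempotentElem R) :
      ‖R * N‖ ^ 2 = (Nᵀ * (R * N)).trace := by
    rw [frobenius_norm_sq_eq_trace, transpose_mul, hR.eq, Matrix.mul_assoc, ← Matrix.mul_assoc R,
      hR'.eq]
  have hpyth : ‖N‖ ^ 2 = ‖P * N‖ ^ 2 + ‖(1 - P) * N‖ ^ 2 := by
    rw [hPN P hP hP', hPN (1 - P) (isSymm_one.sub hP) hP'.one_sub, ← trace_add, ← Matrix.mul_add,
      ← Matrix.add_mul, add_sub_cancel, Matrix.one_mul, frobenius_norm_sq_eq_trace]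
  refine le_of_sq_le_sq ?_ (norm_nonneg _)
  linarith [sq_nonneg ‖(1 - P) * N‖]

lemma frobenius_norm_mul_mul_le_of_isIdempotentElem {P : Matrix m m ℝ} (hP : P.IsSymm)
    (hP' : IsIdempotentElem P) (N : Matrix m m ℝ) : ‖P * N * P‖ ≤ ‖N‖ := by
  have hright : ‖P * N * P‖ ≤ ‖P * N‖ := by
    rw [← frobenius_norm_transpose, transpose_mul, hP.eq, ← frobenius_norm_transpose (P * N)]
    exact frobenius_norm_mul_le_of_isIdempotentElem hP hP' _
  exact hright.trans (frobenius_norm_mul_le_of_isIdempotentElem hP hP' N)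

lemma mul_eq_zero_of_range_mulVecLin_le {P : Matrix k m ℝ} {B : Matrix m n ℝ} {Q : Matrix m l ℝ}
    (hPQ : P * Q = 0) (h : LinearMap.range B.mulVecLin ≤ LinearMap.range Q.mulVecLin) :
    P * B = 0 := by
  classical
  refine ext_iff_mulVec.2 fun x ↦ ?_
  obtain ⟨y, hy : Q *ᵥ y = B *ᵥ x⟩ := h ⟨x, rfl⟩
  rw [← mulVec_mulVec, ← hy, mulVec_mulVec, hPQ, zero_mulVec, zero_mulVec]

lemma isSymm_one_sub_mul_transpose [DecidableEq k] (Q : Matrix k l ℝ) : (1 - Q * Qᵀ).IsSymm := by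
  rw [IsSymm, transpose_sub, transpose_one, transpose_mul, transpose_transpose]

variable [DecidableEq m] [DecidableEq l] {Q : Matrix m l ℝ}

lemma one_sub_mul_transpose_mul_self (hQ : Qᵀ * Q = 1) : (1 - Q * Qᵀ) * Q = 0 := by
  rw [Matrix.sub_mul, Matrix.mul_assoc, hQ, Matrix.one_mul, Matrix.mul_one, sub_self]

lemma isIdempotentElem_one_sub_mul_transpose (hQ : Qᵀ * Q = 1) :
    IsIdempotentElem (1 - Q * Qᵀ) := by
  refine IsIdempotentElem.one_sub ?_
  rw [IsIdempotentElem, Matrix.mul_assoc, ← Matrix.mul_assoc Qᵀ, hQ, Matrix.one_mul]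

lemma trace_one_sub_mul_transpose_mul_mul (hQ : Qᵀ * Q = 1) (A : Matrix m m ℝ) :
    ((1 - Q * Qᵀ) * A * (1 - Q * Qᵀ)).trace = A.trace - (Qᵀ * A * Q).trace := by
  rw [trace_mul_comm, ← Matrix.mul_assoc, (isIdempotentElem_one_sub_mul_transpose hQ).eq,
    Matrix.sub_mul, Matrix.one_mul, trace_sub, trace_mul_cycle Qᵀ]

end RangeFinder

section Estimators

open scoped Matrix.Norms.Frobenius

variable {d p n : ℕ} {A B : Matrix (Fin d) (Fin d) ℝ} {q s : Fin d → Fin p → ℝ}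

lemma hutch_eq_sum (B : Matrix (Fin d) (Fin d) ℝ) (g : Fin d → Fin n → ℝ) :
    hutch B g = 1 / n * ∑ j, (of g).col j ⬝ᵥ B *ᵥ (of g).col j := by
  rw [hutch, Matrix.mul_assoc]
  rfl

lemma hutchppEst_sub_trace (hq : (of q)ᵀ * of q = 1) (g : Fin d → Fin n → ℝ) :
    hutchppEst A q g - A.trace =
      hutch ((1 - of q * (of q)ᵀ) * A * (1 - of q * (of q)ᵀ)) g -
        ((1 - of q * (of q)ᵀ) * A * (1 - of q * (of q)ᵀ)).trace := by
  rw [trace_one_sub_mul_transpose_mul_mul hq, hutchppEst, hutch]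
  simp only [Matrix.mul_assoc]
  ring

lemma frobenius_norm_one_sub_mul_transpose_mul_mul_le (hq : (of q)ᵀ * of q = 1)
    (h : LinearMap.range (A * of s).mulVecLin ≤ LinearMap.range (of q).mulVecLin) :
    ‖(1 - of q * (of q)ᵀ) * A * (1 - of q * (of q)ᵀ)‖ ≤
      ‖nystromResidual A (List.ofFn (of s).col)‖ := by
  have hPA : (1 - of q * (of q)ᵀ) * (A * of s) = 0 :=
    mul_eq_zero_of_range_mulVecLin_le (one_sub_mul_transpose_mul_self hq) h
  have hcol : ∀ v ∈ List.ofFn (of s).col, (1 - of q * (of q)ᵀ) *ᵥ A *ᵥ v = 0 := by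
    refine List.forall_mem_ofFn_iff.2 fun j ↦ ?_
    rw [← mulVec_single_one, mulVec_mulVec _ A, mulVec_mulVec, hPA, zero_mulVec]
  rw [← mul_nystromResidual_of_mulVec_eq_zero hcol]
  exact frobenius_norm_mul_mul_le_of_isIdempotentElem (isSymm_one_sub_mul_transpose _)
    (isIdempotentElem_one_sub_mul_transpose hq) _

/-- The `±1` matrix whose columns are the given samples, so that a uniform choice of the samples
makes it a Rademacher matrix. -/
def signMat {ι κ : Type*} (T : κ → ι → ℤˣ) : ι → κ → ℝ :=
  fun i k ↦ signVec (T k) i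

lemma col_of_signMat {ι κ : Type*} (T : κ → ι → ℤˣ) (k : κ) :
    (of (signMat T)).col k = signVec (T k) :=
  rfl

lemma hutch_signMat_sub_trace (hn : 0 < n) (B : Matrix (Fin d) (Fin d) ℝ)
    (G : Fin n → Fin d → ℤˣ) :
    hutch B (signMat G) - B.trace = 1 / n * ∑ j, signChaos B (G j) := by
  simp only [hutch_eq_sum, col_of_signMat, signChaos, sum_sub_distrib, Fin.sum_const, nsmul_eq_mul]
  field_simp

lemma unifProb_lt_abs_hutch_signMat_sub_trace_le (hn : 0 < n) (hB : B.IsSymm) {F u : ℝ}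
    (hF : ‖B‖ ≤ F) (hu : 0 ≤ u) :
    unifProb {G : Fin n → Fin d → ℤˣ | u * F < |hutch B (signMat G) - B.trace|} ≤
      2 * Real.exp (-(n / 8 * (min u 1 * u))) := by
  have hn' : (0 : ℝ) < n := Nat.cast_pos.2 hn
  have htail := unifProb_lt_abs_sum_signChaos_le (κ := Fin n) hB hF hu
  simp only [Fintype.card_fin] at htail
  refine (unifProb_mono fun G hG ↦ ?_).trans htail
  rwa [Set.mem_ofPred_eq, hutch_signMat_sub_trace hn, abs_mul,
    abs_of_pos (one_div_pos.2 hn'), one_div, lt_inv_mul_iff₀ hn'] at hG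

lemma unifProb_lt_abs_hutchppEst_sub_trace_le (hA : A.PosSemidef) (hp : 0 < p) (hn : 0 < n)
    {ε : ℝ} (hε : 0 ≤ ε) {Q : (Fin d → Fin p → ℝ) → (Fin d → Fin p → ℝ)}
    (hQ : ∀ s, (of (Q s))ᵀ * of (Q s) = 1)
    (hR : ∀ s, LinearMap.range (A * of s).mulVecLin ≤ LinearMap.range (of (Q s)).mulVecLin) :
    unifProb {ω : (Fin p → Fin d → ℤˣ) × (Fin n → Fin d → ℤˣ) |
        ε * A.trace < |hutchppEst A (Q (signMat ω.1)) (signMat ω.2) - A.trace|} ≤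
      Real.exp (-(p / 200)) +
        2 * Real.exp (-(n / 8 * (min (ε * √(p / 16000)) 1 * (ε * √(p / 16000))))) := by
  refine (unifProb_prod_le _ (by positivity) fun S hS ↦ ?_).trans
    (add_le_add_left (unifProb_lt_norm_nystromResidual_sq_le hA p) _)
  set q := Q (signMat S)
  set F := A.trace / √(p / 16000)
  have hN : ‖nystromResidual A (List.ofFn fun i ↦ signVec (S i))‖ ≤ F := by
    refine le_of_sq_le_sq ?_ (div_nonneg hA.trace_nonneg (Real.sqrt_nonneg _))
    rw [div_pow, Real.sq_sqrt (by positivity), le_div_iff₀ (by positivity)]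
    rw [Set.mem_ofPred_eq, not_lt] at hS
    linarith
  have hF := (frobenius_norm_one_sub_mul_transpose_mul_mul_le (hQ _) (hR (signMat S))).trans hN
  have hsymm : ((1 - of q * (of q)ᵀ) * A * (1 - of q * (of q)ᵀ)).IsSymm := by
    rw [IsSymm, transpose_mul, transpose_mul, (isSymm_one_sub_mul_transpose _).eq,
      (isHermitian_iff_isSymm.1 hA.isHermitian).eq, Matrix.mul_assoc]
  have hu : ε * √(p / 16000) * F = ε * A.trace := by
    simp only [F]
    field_simp
  simpa only [Set.mem_ofPred_eq, hutchppEst_sub_trace (hQ _), hu] using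
    unifProb_lt_abs_hutch_signMat_sub_trace_le hn hsymm hF (u := ε * √(p / 16000)) (by positivity)

end Estimators

section RademacherMeasure

variable {α : Type*} [Fintype α] [MeasurableSpace α] [MeasurableSingletonClass α]

lemma uniformOn_univ_eq_ofReal_unifProb [Nonempty α] (E : Set α) :
    uniformOn Set.univ E = ENNReal.ofReal (unifProb E) := by
  classical
  have hE : unifProb E = (E.toFinset.card : ℝ) / Fintype.card α := by
    rw [unifProb, Fintype.expect_eq_sum_div_card, ← Set.coe_toFinset E, sum_indicator_eq_sum_inter]
    simp
  rw [hE, uniformOn_univ, ENNReal.ofReal_div_of_pos (Nat.cast_pos.2 Fintype.card_pos),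
    ENNReal.ofReal_natCast, ENNReal.ofReal_natCast, ← Measure.count_apply_finset, Set.coe_toFinset]

lemma uniformOn_univ_singleton (a : α) :
    uniformOn Set.univ {a} = (Fintype.card α : ENNReal)⁻¹ := by
  rw [uniformOn_univ, Measure.count_singleton, one_div]

lemma uniformOn_univ_prod {α β : Type*} [Finite α] [Finite β] [Nonempty α] [Nonempty β]
    [MeasurableSpace α] [MeasurableSpace β] [MeasurableSingletonClass α]
    [MeasurableSingletonClass β] :
    (uniformOn Set.univ : Measure α).prod (uniformOn Set.univ : Measure β) =
      uniformOn Set.univ := by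
  cases nonempty_fintype α
  cases nonempty_fintype β
  refine Measure.ext_of_singleton fun ⟨a, b⟩ ↦ ?_
  rw [← Set.singleton_prod_singleton, Measure.prod_prod, Set.singleton_prod_singleton]
  simp only [uniformOn_univ_singleton, Fintype.card_prod, Nat.cast_mul]
  rw [ENNReal.mul_inv (by simp) (by simp)]

lemma map_equiv_uniformOn_univ {α β : Type*} [Finite α] [Finite β] [MeasurableSpace α]
    [MeasurableSpace β] [MeasurableSingletonClass α] [MeasurableSingletonClass β] (e : α ≃ β) :
    (uniformOn Set.univ : Measure α).map e = uniformOn Set.univ := by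
  cases nonempty_fintype α
  cases nonempty_fintype β
  refine Measure.ext_of_singleton fun b ↦ ?_
  rw [Measure.map_apply (measurable_of_finite _) (measurableSet_singleton b),
    ← e.image_symm_eq_preimage, Set.image_singleton, uniformOn_univ_singleton,
    uniformOn_univ_singleton, Fintype.card_congr e]

lemma pi_map_uniformOn_univ {α β ι : Type*} [Finite α] [Nonempty α] [Fintype ι]
    [MeasurableSpace α] [MeasurableSingletonClass α] [MeasurableSpace β] (f : α → β) :
    Measure.pi (fun _ : ι ↦ (uniformOn Set.univ : Measure α).map f) =
      (uniformOn Set.univ : Measure (ι → α)).map fun t i ↦ f (t i) := by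
  have hf : Measurable f := measurable_of_finite f
  have := Measure.isProbabilityMeasure_map (μ := uniformOn Set.univ) hf.aemeasurable
  rw [← Measure.pi_map_pi fun _ ↦ hf.aemeasurable, ← uniformOn_pi, Set.pi_univ]

instance {M : Type*} [Monoid M] [MeasurableSpace M] [MeasurableSingletonClass M] :
    MeasurableSingletonClass Mˣ :=
  ⟨fun u ↦ ⟨{(u : M)}, measurableSet_singleton _, by ext; simp [Units.ext_iff]⟩⟩

lemma rademacher_eq_map_uniformOn_univ :
    rademacher = (uniformOn Set.univ : Measure ℤˣ).map fun a : ℤˣ ↦ ((a : ℤ) : ℝ) := by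
  have hunif : (uniformOn Set.univ : Measure ℤˣ) =
      (1 / 2 : ENNReal) • Measure.dirac (-1) + (1 / 2 : ENNReal) • Measure.dirac 1 := by
    refine Measure.ext_of_singleton fun a ↦ ?_
    rcases Int.units_eq_one_or a with rfl | rfl <;> simp [uniformOn_univ_singleton]
  rw [hunif, Measure.map_add _ _ (measurable_of_finite _), Measure.map_smul, Measure.map_smul,
    Measure.map_dirac' (measurable_of_finite _), Measure.map_dirac' (measurable_of_finite _)]
  simp [rademacher]

lemma radMeasure_eq_map_signMat (d n : ℕ) :
    radMeasure d n = (uniformOn Set.univ : Measure (Fin n → Fin d → ℤˣ)).map signMat := by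
  rw [← map_equiv_uniformOn_univ (Equiv.piComm fun (_ : Fin d) (_ : Fin n) ↦ ℤˣ),
    Measure.map_map (measurable_of_finite _) (measurable_of_finite _), radMeasure,
    rademacher_eq_map_uniformOn_univ, pi_map_uniformOn_univ, pi_map_uniformOn_univ]
  rfl

lemma ofReal_one_sub_le_prod_radMeasure {d p n : ℕ} {δ : ℝ}
    {E : Set ((Fin d → Fin p → ℝ) × (Fin d → Fin n → ℝ))}
    (h : unifProb {ω : (Fin p → Fin d → ℤˣ) × (Fin n → Fin d → ℤˣ) |
      (signMat ω.1, signMat ω.2) ∉ E} ≤ δ) :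
    ENNReal.ofReal (1 - δ) ≤ (radMeasure d p).prod (radMeasure d n) E := by
  rw [radMeasure_eq_map_signMat, radMeasure_eq_map_signMat,
    Measure.map_prod_map _ _ (measurable_of_finite _) (measurable_of_finite _), uniformOn_univ_prod]
  refine le_trans ?_ (Measure.le_map_apply (measurable_of_finite _).aemeasurable E)
  rw [uniformOn_univ_eq_ofReal_unifProb]
  refine ENNReal.ofReal_le_ofReal ((sub_le_sub_left h 1).trans ?_)
  rw [← unifProb_compl, Set.compl_ofPred]
  simp only [not_not]
  rfl

end RademacherMeasure

section SampleSize

variable {k L ε P N : ℝ}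

lemma mul_le_of_le_sampleSize (hk : 1 ≤ k) (hL : 0 ≤ L) (hε : 0 < ε)
    (hP : 16000 * k * (√L / ε + L) ≤ P) (hN : 16000 * k * (√L / ε + L) ≤ N) :
    k * L ≤ N / 8 * (min (ε * √(P / 16000)) 1 * (ε * √(P / 16000))) := by
  set u := ε * √(P / 16000)
  have hP₁ : 16000 * (k * (√L / ε)) ≤ P := by nlinarith
  have hN₁ : 16000 * (k * (√L / ε)) ≤ N := by nlinarith
  have hN₂ : 16000 * (k * L) ≤ N := by
    have : 0 ≤ k * (√L / ε) := by positivity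
    linarith
  have hkL : 0 ≤ k * L := by positivity
  rcases le_total 1 u with hu | hu
  · rw [min_eq_right hu, one_mul]
    nlinarith
  have hP₀ : 0 ≤ P := le_trans (by positivity) hP₁
  have hN₀ : 0 ≤ N := le_trans (by positivity) hN₁
  have hNu : k * L ≤ N / 16000 * u ^ 2 := calc
    k * L ≤ k ^ 2 * L := mul_le_mul_of_nonneg_right (le_self_pow₀ hk two_ne_zero) hL
    _ = k * (√L / ε) * (ε ^ 2 * (k * (√L / ε))) := by
        field_simp
        rw [Real.sq_sqrt hL]
    _ ≤ N / 16000 * (ε ^ 2 * (P / 16000)) := by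
        have := (le_div_iff₀' (by norm_num)).2 hN₁
        have := (le_div_iff₀' (by norm_num)).2 hP₁
        gcongr
    _ = N / 16000 * u ^ 2 := by rw [mul_pow, Real.sq_sqrt (by positivity)]
  rw [min_eq_left hu, ← sq]
  linarith [mul_nonneg hN₀ (sq_nonneg u)]

lemma unifProb_lt_abs_hutchppEst_sub_trace_le_of_le_sampleSize {d p n : ℕ}
    {A : Matrix (Fin d) (Fin d) ℝ} (hA : A.PosSemidef) (hk : 1 ≤ k) (hL : 0 < L) (hε : 0 < ε)
    (hp : 16000 * k * (√L / ε + L) ≤ p) (hn : 16000 * k * (√L / ε + L) ≤ n)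
    {Q : (Fin d → Fin p → ℝ) → (Fin d → Fin p → ℝ)} (hQ : ∀ s, (of (Q s))ᵀ * of (Q s) = 1)
    (hR : ∀ s, LinearMap.range (A * of s).mulVecLin ≤ LinearMap.range (of (Q s)).mulVecLin) :
    unifProb {ω : (Fin p → Fin d → ℤˣ) × (Fin n → Fin d → ℤˣ) |
        ε * A.trace < |hutchppEst A (Q (signMat ω.1)) (signMat ω.2) - A.trace|} ≤
      3 * Real.exp (-(k * L)) := by
  have hC : 16000 * (k * L) ≤ 16000 * k * (√L / ε + L) := by
    have : 0 ≤ 16000 * k * (√L / ε) := by positivity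
    linarith
  have hkL : 0 < k * L := by positivity
  have hp₀ : 0 < p := Nat.cast_pos.1 (by linarith : (0 : ℝ) < p)
  have hn₀ : 0 < n := Nat.cast_pos.1 (by linarith : (0 : ℝ) < n)
  calc _ ≤ Real.exp (-(p / 200)) +
        2 * Real.exp (-(n / 8 * (min (ε * √(p / 16000)) 1 * (ε * √(p / 16000))))) :=
        unifProb_lt_abs_hutchppEst_sub_trace_le hA hp₀ hn₀ hε.le hQ hR
    _ ≤ Real.exp (-(k * L)) + 2 * Real.exp (-(k * L)) := by
        have hsample := mul_le_of_le_sampleSize hk hL.le hε hp hn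
        refine add_le_add (Real.exp_le_exp.2 (by linarith)) ?_
        exact mul_le_mul_of_nonneg_left (Real.exp_le_exp.2 (neg_le_neg hsample)) zero_le_two
    _ = 3 * Real.exp (-(k * L)) := by ring

end SampleSize

theorem stmt7_general {δ₀ : ℝ} (hδ₀ : 0 < δ₀) (hδ₀' : δ₀ < 1) : ∃ C : ℝ, 0 < C ∧
    ∀ (d : ℕ) (A : Matrix (Fin d) (Fin d) ℝ) (δ ε : ℝ) (p ℓ : ℕ)
      (Q : (Fin d → Fin p → ℝ) → (Fin d → Fin p → ℝ)),
      A.PosSemidef → 0 < δ → δ ≤ δ₀ → 0 < ε →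
      C * (√(Real.log (1 / δ)) / ε + Real.log (1 / δ)) ≤ (p : ℝ) →
      C * (√(Real.log (1 / δ)) / ε + Real.log (1 / δ)) ≤ (ℓ : ℝ) →
      (∀ s, (of (Q s))ᵀ * of (Q s) = 1) →
      (∀ s, LinearMap.range (A * of s).mulVecLin ≤ LinearMap.range (of (Q s)).mulVecLin) →
      ENNReal.ofReal (1 - δ) ≤
        ((radMeasure d p).prod (radMeasure d ℓ))
          {ω | (1 - ε) * A.trace ≤ hutchppEst A (Q ω.1) ω.2 ∧
            hutchppEst A (Q ω.1) ω.2 ≤ (1 + ε) * A.trace} := by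
  have hL₀ : 0 < Real.log (1 / δ₀) := Real.log_pos ((one_lt_div hδ₀).2 hδ₀')
  set k := 1 + Real.log 3 / Real.log (1 / δ₀)
  have hk : 1 ≤ k := le_add_of_nonneg_right (by positivity)
  refine ⟨16000 * k, by positivity, fun d A δ ε p ℓ Q hA hδ hδδ₀ hε hp hℓ hQ hR ↦ ?_⟩
  have hL : Real.log (1 / δ₀) ≤ Real.log (1 / δ) := by gcongr
  have hkL : Real.log 3 + Real.log (1 / δ) ≤ k * Real.log (1 / δ) := by
    rw [add_mul, one_mul, add_comm, div_mul_eq_mul_div]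
    gcongr
    exact (le_div_iff₀ hL₀).2 (by gcongr)
  refine ofReal_one_sub_le_prod_radMeasure ?_
  calc _ ≤ unifProb {ω : (Fin p → Fin d → ℤˣ) × (Fin ℓ → Fin d → ℤˣ) |
        ε * A.trace < |hutchppEst A (Q (signMat ω.1)) (signMat ω.2) - A.trace|} := by
        refine unifProb_mono fun ω hω ↦ ?_
        by_contra hsmall
        rw [Set.mem_ofPred_eq, not_lt, abs_le] at hsmall
        exact hω ⟨by linarith, by linarith⟩
    _ ≤ 3 * Real.exp (-(k * Real.log (1 / δ))) :=
        unifProb_lt_abs_hutchppEst_sub_trace_le_of_le_sampleSize hA hk (hL₀.trans_le hL) hε hp hℓ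
          hQ hR
    _ ≤ 3 * Real.exp (-(Real.log 3 + Real.log (1 / δ))) := by gcongr
    _ = δ := by
        rw [one_div, Real.log_inv, neg_add, neg_neg, Real.exp_add, Real.exp_neg, Real.exp_log hδ,
          Real.exp_log three_pos, mul_inv_cancel_left₀ three_ne_zero]

theorem stmt7 : ∃ C : ℝ, 0 < C ∧
    ∀ (d : ℕ) (A : Matrix (Fin d) (Fin d) ℝ) (δ ε : ℝ) (p ℓ : ℕ)
      (Q : (Fin d → Fin p → ℝ) → (Fin d → Fin p → ℝ)),
      A.PosSemidef → 0 < δ → δ < 1 / 2 → 0 < ε → ε < 1 →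
      C * (Real.sqrt (Real.log (1 / δ)) / ε + Real.log (1 / δ)) ≤ (p : ℝ) →
      C * (Real.sqrt (Real.log (1 / δ)) / ε + Real.log (1 / δ)) ≤ (ℓ : ℝ) →
      Measurable Q →
      (∀ s, (Matrix.of (Q s))ᵀ * Matrix.of (Q s) = 1) →
      (∀ s, LinearMap.range (A * Matrix.of s).mulVecLin ≤
        LinearMap.range (Matrix.of (Q s)).mulVecLin) →
      ENNReal.ofReal (1 - δ) ≤
        ((radMeasure d p).prod (radMeasure d ℓ))
          {ω | (1 - ε) * A.trace ≤ hutchppEst A (Q ω.1) ω.2 ∧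
            hutchppEst A (Q ω.1) ω.2 ≤ (1 + ε) * A.trace} := by
  obtain ⟨C, hC, h⟩ := stmt7_general (δ₀ := 1 / 2) (by norm_num) (by norm_num)
  exact ⟨C, hC, fun d A δ ε p ℓ Q hA hδ hδ' hε _ hp hℓ _ ↦ h d A δ ε p ℓ Q hA hδ hδ'.le hε hp hℓ⟩
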